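/- arXiv:1403.3557 — 4 statements merged into one kernel-verified Lean document; each statement's English description precedes it below -/
import Mathlib

section
/- Let r1, r2, r3, r4, r5, r6 be arbitrary real numbers and define a 2×2×2 array q of real numbers (indices in {0,1}) by: q_{000} = e^{r3}/(e^{3r3}+e^{3r6})^{1/3}, q_{001} = e^{r4}, q_{010} = e^{r6}/(e^{3r3}+e^{3r6})^{1/3}, q_{011} = e^{r2}, q_{100} = -e^{r2-r3-r4+r5+r6}, q_{101} = e^{r1+r3-r6}/(e^{3r1}+e^{3r1+3r3-3r6})^{1/3}, q_{110} = e^{r5}, q_{111} = e^{r1}/(e^{3r1}+e^{3r1+3r3-3r6})^{1/3}, where (·)^{1/3} denotes the real cube root. Then q is an orthogonal 3-hypermatrix: for all i0, i1, i2 ∈ {0,1}, the sum over k ∈ {0,1} of q_{i0 k i2} · q_{i1 k i0} · q_{i2 k i1} equals 1 if i0 = i1 = i2 and 0 otherwise. -/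
/-!
Cyclic invariance of `∑ k, q i₀ k i₂ * q i₁ k i₀ * q i₂ k i₁` in `(i₀, i₁, i₂)` reduces the eight
equations for side two to four. The columns `q 0 · 0` and `q 1 · 1` are both obtained by rescaling
exponentials to have sum of cubes one. Their exponents `(r3, r6)` and `(r1 + r3 - r6, r1)` differ
by the constant `r1 - r6`, so both columns are the same vector `u`, and the four equations collapse
to two: the normalisation `∑ k, u k ^ 3 = 1` and the relation `∑ k, q 0 k 1 * q 1 k 0 * u k = 0`,
which follows from `u 0 = exp (r3 - r6) * u 1`.
-/

section Hypermatrix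

variable {ι R : Type*} [Fintype ι] [CommSemiring R]

/-- The Bhattacharya–Mesner product of a cubic third-order hypermatrix with its two cyclic
transposes; it plays the role that `A * Aᵀ` plays for matrices. -/
def hypermatrixGram (q : ι → ι → ι → R) (i₀ i₁ i₂ : ι) : R :=
  ∑ k, q i₀ k i₂ * q i₁ k i₀ * q i₂ k i₁

/-- Orthogonality of a third-order hypermatrix in the Bhattacharya–Mesner sense: its
`hypermatrixGram` is the third-order Kronecker delta. -/
def IsOrthogonalHypermatrix [DecidableEq ι] (q : ι → ι → ι → R) : Prop :=
  ∀ i₀ i₁ i₂, hypermatrixGram q i₀ i₁ i₂ = if i₀ = i₁ ∧ i₁ = i₂ then 1 else 0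

theorem hypermatrixGram_rotate (q : ι → ι → ι → R) (i₀ i₁ i₂ : ι) :
    hypermatrixGram q i₁ i₂ i₀ = hypermatrixGram q i₀ i₁ i₂ :=
  Finset.sum_congr rfl fun _ _ ↦ by ring

theorem isOrthogonalHypermatrix_fin_two_iff_gram {q : Fin 2 → Fin 2 → Fin 2 → R} :
    IsOrthogonalHypermatrix q ↔
      hypermatrixGram q 0 0 0 = 1 ∧ hypermatrixGram q 1 1 1 = 1 ∧
        hypermatrixGram q 0 0 1 = 0 ∧ hypermatrixGram q 0 1 1 = 0 := by
  have rotate := hypermatrixGram_rotate q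
  simp only [IsOrthogonalHypermatrix, Fin.forall_fin_two, rotate 0 0 1, ← rotate 1 0 0,
    rotate 0 1 1, ← rotate 1 0 1]
  simp only [Fin.isValue, zero_ne_one, one_ne_zero, and_self, and_true, and_false, if_true,
    if_false]
  tauto

theorem isOrthogonalHypermatrix_fin_two_iff_of_columns_eq {q : Fin 2 → Fin 2 → Fin 2 → R}
    {u : Fin 2 → R} (h_zero : ∀ k, q 0 k 0 = u k) (h_one : ∀ k, q 1 k 1 = u k) :
    IsOrthogonalHypermatrix q ↔ ∑ k, u k ^ 3 = 1 ∧ ∑ k, q 0 k 1 * q 1 k 0 * u k = 0 := by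
  have cube (x : R) : x * x * x = x ^ 3 := by ring
  simp only [isOrthogonalHypermatrix_fin_two_iff_gram, hypermatrixGram, h_zero, h_one, cube,
    mul_right_comm _ (u _), and_self, and_self_left]

end Hypermatrix

section NormalizedExp

variable {ι : Type*} [Fintype ι]

/-- The vector with entries `exp (a i)`, rescaled by its `ℓⁿ` norm so that its `n`-th powers
sum to one. -/
noncomputable def normalizedExp (n : ℕ) (a : ι → ℝ) (i : ι) : ℝ :=
  Real.exp (a i) / (∑ j, Real.exp (n * a j)) ^ (1 / n : ℝ)

theorem sum_normalizedExp_pow [Nonempty ι] {n : ℕ} (hn : n ≠ 0) (a : ι → ℝ) :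
    ∑ i, normalizedExp n a i ^ n = 1 := by
  have hsum : 0 < ∑ j, Real.exp (n * a j) :=
    Finset.sum_pos (fun _ _ ↦ Real.exp_pos _) Finset.univ_nonempty
  simp only [normalizedExp, div_pow, ← Real.exp_nat_mul, one_div,
    Real.rpow_inv_natCast_pow hsum.le hn, ← Finset.sum_div]
  exact div_self hsum.ne'

theorem normalizedExp_add_const {n : ℕ} (hn : n ≠ 0) (a : ι → ℝ) (c : ℝ) :
    normalizedExp n (fun i ↦ a i + c) = normalizedExp n a := by
  have hnorm : (∑ j, Real.exp (n * (a j + c))) ^ (1 / n : ℝ) =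
      (∑ j, Real.exp (n * a j)) ^ (1 / n : ℝ) * Real.exp c := by
    simp only [mul_add, Real.exp_add, ← Finset.sum_mul]
    rw [Real.mul_rpow (by positivity) (by positivity), Real.exp_nat_mul, one_div,
      Real.pow_rpow_inv_natCast (Real.exp_pos c).le hn]
  funext i
  rw [normalizedExp, hnorm, Real.exp_add, mul_div_mul_right _ _ (Real.exp_ne_zero c),
    normalizedExp]

theorem normalizedExp_eq_exp_sub_mul (n : ℕ) (a : ι → ℝ) (i j : ι) :
    normalizedExp n a i = Real.exp (a i - a j) * normalizedExp n a j := by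
  rw [normalizedExp, normalizedExp, ← mul_div_assoc, ← Real.exp_add, sub_add_cancel]

theorem normalizedExp_fin_two (n : ℕ) (a : Fin 2 → ℝ) (k : Fin 2) :
    normalizedExp n a k =
      Real.exp (a k) / (Real.exp (n * a 0) + Real.exp (n * a 1)) ^ (1 / n : ℝ) := by
  rw [normalizedExp, Fin.sum_univ_two]

theorem normalizedExp_fin_two_add_sub {n : ℕ} (hn : n ≠ 0) (a b c : ℝ) :
    normalizedExp n ![c + a - b, c] = normalizedExp n ![a, b] := by
  rw [← normalizedExp_add_const hn ![a, b] (c - b)]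
  congr 1
  simp only [funext_iff, Fin.forall_fin_two, Matrix.cons_val_zero, Matrix.cons_val_one]
  constructor <;> ring

end NormalizedExp

/-- The explicit parametrization yields an orthogonal `2×2×2`
hypermatrix in the Bhattacharya–Mesner sense. -/
theorem stmt_0 (r1 r2 r3 r4 r5 r6 : ℝ)
    (q : Fin 2 → Fin 2 → Fin 2 → ℝ)
    (h000 : q 0 0 0 = Real.exp r3 / (Real.exp (3 * r3) + Real.exp (3 * r6)) ^ ((1 : ℝ) / 3))
    (h001 : q 0 0 1 = Real.exp r4)
    (h010 : q 0 1 0 = Real.exp r6 / (Real.exp (3 * r3) + Real.exp (3 * r6)) ^ ((1 : ℝ) / 3))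
    (h011 : q 0 1 1 = Real.exp r2)
    (h100 : q 1 0 0 = -Real.exp (r2 - r3 - r4 + r5 + r6))
    (h101 : q 1 0 1 = Real.exp (r1 + r3 - r6) /
      (Real.exp (3 * r1) + Real.exp (3 * r1 + 3 * r3 - 3 * r6)) ^ ((1 : ℝ) / 3))
    (h110 : q 1 1 0 = Real.exp r5)
    (h111 : q 1 1 1 = Real.exp r1 /
      (Real.exp (3 * r1) + Real.exp (3 * r1 + 3 * r3 - 3 * r6)) ^ ((1 : ℝ) / 3)) :
    ∀ i0 i1 i2 : Fin 2,
      ∑ k : Fin 2, q i0 k i2 * q i1 k i0 * q i2 k i1 =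
        if i0 = i1 ∧ i1 = i2 then 1 else 0 := by
  have column_zero : ∀ k, q 0 k 0 = normalizedExp 3 ![r3, r6] k := by
    simp [Fin.forall_fin_two, normalizedExp_fin_two, h000, h010]
  have column_one : ∀ k, q 1 k 1 = normalizedExp 3 ![r3, r6] k := by
    rw [← normalizedExp_fin_two_add_sub three_ne_zero r3 r6 r1]
    simp [Fin.forall_fin_two, normalizedExp_fin_two, h101, h111, mul_add, mul_sub, add_comm]
  have exponents : Real.exp r4 * Real.exp (r2 - r3 - r4 + r5 + r6) * Real.exp (r3 - r6) =
      Real.exp r2 * Real.exp r5 := by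
    simp only [← Real.exp_add]
    ring_nf
  refine (isOrthogonalHypermatrix_fin_two_iff_of_columns_eq column_zero column_one).2
    ⟨sum_normalizedExp_pow three_ne_zero _, ?_⟩
  rw [Fin.sum_univ_two, normalizedExp_eq_exp_sub_mul 3 ![r3, r6] 0 1, h001, h100, h011, h110]
  simp only [Matrix.cons_val_zero, Matrix.cons_val_one]
  linear_combination -normalizedExp 3 ![r3, r6] 1 * exponents
end

section
/- Let P be an orthogonal third-order hypermatrix of side n and Q an orthogonal third-order hypermatrix of side m (both with real entries). Define their direct sum R, a third-order hypermatrix of side n+m, by R_{ijk} = P_{ijk} if all three indices are less than n, R_{ijk} = Q_{(i−n)(j−n)(k−n)} if all three indices are at least n, and R_{ijk} = 0 otherwise. Then R is an orthogonal third-order hypermatrix of side n+m. -/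
/-!
Orthogonality of `q` says that the Bhattacharya–Mesner product of `q`, `qᵀ` and `qᵀᵀ` is the
Kronecker delta, where `ᵀ` is the cyclic transpose. Block-diagonal hypermatrices are closed under
everything in this equation: the direct sum commutes with the cyclic transpose and with the product,
and the Kronecker delta of a disjoint union is the direct sum of the Kronecker deltas.
-/

/-- A third-order hypermatrix of side `n` is orthogonal in the
Bhattacharya–Mesner sense. -/
def IsOrthogonalHypermatrix3 {n : ℕ} (q : Fin n → Fin n → Fin n → ℝ) : Prop :=
  ∀ i0 i1 i2 : Fin n,
    ∑ k : Fin n, q i0 k i2 * q i1 k i0 * q i2 k i1 =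
      if i0 = i1 ∧ i1 = i2 then 1 else 0

/-- Third-order hypermatrices over `K`, with a separate index type for each of the three slots. -/
abbrev Hypermatrix3 (ι₁ ι₂ ι₃ K : Type*) := ι₁ → ι₂ → ι₃ → K

namespace Hypermatrix3

variable {α α₁ α₂ α₃ α₄ β β₁ β₂ β₃ β₄ K : Type*}

/-- The cyclic transpose of a third-order hypermatrix; applying it three times is the identity. -/
def transpose (A : Hypermatrix3 α₁ α₂ α₃ K) : Hypermatrix3 α₃ α₁ α₂ K :=
  fun i j k => A j k i

/-- The Kronecker delta, the third-order analogue of the identity matrix. -/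
def delta (α K : Type*) [DecidableEq α] [Zero K] [One K] : Hypermatrix3 α α α K :=
  fun i j k => if i = j ∧ j = k then 1 else 0

/-- The block-diagonal sum of two third-order hypermatrices, indexed by disjoint unions. -/
def directSum [Zero K] (A : Hypermatrix3 α₁ α₂ α₃ K) (B : Hypermatrix3 β₁ β₂ β₃ K) :
    Hypermatrix3 (α₁ ⊕ β₁) (α₂ ⊕ β₂) (α₃ ⊕ β₃) K
  | .inl i, .inl j, .inl k => A i j k
  | .inr i, .inr j, .inr k => B i j k
  | _, _, _ => 0

/-- The ternary Bhattacharya–Mesner product: the contracted index `t` is the middle index of the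
first factor, the last index of the second and the first index of the third. -/
def bmProd [Fintype α₄] [NonUnitalNonAssocSemiring K] (A : Hypermatrix3 α₁ α₄ α₃ K)
    (B : Hypermatrix3 α₁ α₂ α₄ K) (C : Hypermatrix3 α₄ α₂ α₃ K) : Hypermatrix3 α₁ α₂ α₃ K :=
  fun i j k => ∑ t, A i t k * B i j t * C t j k

/-- Orthogonality in the Bhattacharya–Mesner sense, for an arbitrary finite index type. -/
def IsOrthogonal [Fintype α] [DecidableEq α] [NonAssocSemiring K]
    (A : Hypermatrix3 α α α K) : Prop :=
  bmProd A A.transpose A.transpose.transpose = delta α K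

theorem isOrthogonal_iff [Fintype α] [DecidableEq α] [NonAssocSemiring K]
    {A : Hypermatrix3 α α α K} :
    IsOrthogonal A ↔
      ∀ i j k, ∑ t, A i t k * A j t i * A k t j = if i = j ∧ j = k then 1 else 0 := by
  simp only [IsOrthogonal, funext_iff, bmProd, transpose, delta]

theorem isOrthogonalHypermatrix3_iff {n : ℕ} {A : Hypermatrix3 (Fin n) (Fin n) (Fin n) ℝ} :
    IsOrthogonalHypermatrix3 A ↔ IsOrthogonal A :=
  isOrthogonal_iff.symm

theorem transpose_directSum [Zero K] (A : Hypermatrix3 α₁ α₂ α₃ K) (B : Hypermatrix3 β₁ β₂ β₃ K) :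
    (directSum A B).transpose = directSum A.transpose B.transpose := by
  ext (i | i) (j | j) (k | k) <;> rfl

theorem delta_sum [DecidableEq α] [DecidableEq β] [Zero K] [One K] :
    delta (α ⊕ β) K = directSum (delta α K) (delta β K) := by
  ext (i | i) (j | j) (k | k) <;> simp [delta, directSum]

theorem bmProd_directSum [Fintype α₄] [Fintype β₄] [NonUnitalNonAssocSemiring K]
    (A : Hypermatrix3 α₁ α₄ α₃ K) (A' : Hypermatrix3 β₁ β₄ β₃ K)
    (B : Hypermatrix3 α₁ α₂ α₄ K) (B' : Hypermatrix3 β₁ β₂ β₄ K)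
    (C : Hypermatrix3 α₄ α₂ α₃ K) (C' : Hypermatrix3 β₄ β₂ β₃ K) :
    bmProd (directSum A A') (directSum B B') (directSum C C') =
      directSum (bmProd A B C) (bmProd A' B' C') := by
  ext (i | i) (j | j) (k | k) <;> simp [bmProd, directSum]

theorem IsOrthogonal.reindex [Fintype α] [DecidableEq α] [Fintype β] [DecidableEq β]
    [NonAssocSemiring K] {A : Hypermatrix3 α α α K} (hA : IsOrthogonal A) (e : β ≃ α) :
    IsOrthogonal fun i j k => A (e i) (e j) (e k) := by
  rw [isOrthogonal_iff] at hA ⊢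
  intro i j k
  calc ∑ t, A (e i) (e t) (e k) * A (e j) (e t) (e i) * A (e k) (e t) (e j)
      = ∑ t, A (e i) t (e k) * A (e j) t (e i) * A (e k) t (e j) :=
        e.sum_comp fun t => A (e i) t (e k) * A (e j) t (e i) * A (e k) t (e j)
    _ = if i = j ∧ j = k then 1 else 0 := by simp only [hA, e.apply_eq_iff_eq]

theorem eq_directSum_finSumFinEquiv_symm [Zero K] {n m : ℕ}
    {P : Hypermatrix3 (Fin n) (Fin n) (Fin n) K} {Q : Hypermatrix3 (Fin m) (Fin m) (Fin m) K}
    {R : Hypermatrix3 (Fin (n + m)) (Fin (n + m)) (Fin (n + m)) K}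
    (hRP : ∀ i j k : Fin (n + m), ∀ (hi : (i : ℕ) < n) (hj : (j : ℕ) < n) (hk : (k : ℕ) < n),
      R i j k = P ⟨i, hi⟩ ⟨j, hj⟩ ⟨k, hk⟩)
    (hRQ : ∀ i j k : Fin (n + m), ∀ (hi : n ≤ (i : ℕ)) (hj : n ≤ (j : ℕ)) (hk : n ≤ (k : ℕ)),
      R i j k = Q ⟨i - n, by omega⟩ ⟨j - n, by omega⟩ ⟨k - n, by omega⟩)
    (hR0 : ∀ i j k : Fin (n + m), ¬((i : ℕ) < n ∧ (j : ℕ) < n ∧ (k : ℕ) < n) →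
      ¬(n ≤ (i : ℕ) ∧ n ≤ (j : ℕ) ∧ n ≤ (k : ℕ)) → R i j k = 0) :
    R = fun i j k => directSum P Q
      (finSumFinEquiv.symm i) (finSumFinEquiv.symm j) (finSumFinEquiv.symm k) := by
  suffices h : ∀ i j k : Fin n ⊕ Fin m,
      R (finSumFinEquiv i) (finSumFinEquiv j) (finSumFinEquiv k) = directSum P Q i j k by
    ext i j k
    simp only [← h, Equiv.apply_symm_apply]
  rintro (i | i) (j | j) (k | k)
  case inl.inl.inl => exact hRP _ _ _ i.isLt j.isLt k.isLt
  case inr.inr.inr =>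
    rw [hRQ _ _ _ (by simp) (by simp) (by simp)]
    simp [directSum]
  all_goals exact hR0 _ _ _ (by simp) (by simp)

end Hypermatrix3

open Hypermatrix3

theorem stmt_1_general {α β K : Type*} [Fintype α] [DecidableEq α] [Fintype β] [DecidableEq β]
    [NonAssocSemiring K] {P : Hypermatrix3 α α α K} {Q : Hypermatrix3 β β β K}
    (hP : IsOrthogonal P) (hQ : IsOrthogonal Q) : IsOrthogonal (directSum P Q) := by
  calc bmProd (directSum P Q) (directSum P Q).transpose (directSum P Q).transpose.transpose
      = directSum (bmProd P P.transpose P.transpose.transpose)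
          (bmProd Q Q.transpose Q.transpose.transpose) := by
        simp only [transpose_directSum, bmProd_directSum]
    _ = directSum (delta α K) (delta β K) := congrArg₂ directSum hP hQ
    _ = delta (α ⊕ β) K := delta_sum.symm

/-- The direct sum of two orthogonal third-order hypermatrices is
again an orthogonal third-order hypermatrix. -/
theorem stmt_1 (n m : ℕ)
    (P : Fin n → Fin n → Fin n → ℝ) (Q : Fin m → Fin m → Fin m → ℝ)
    (hP : IsOrthogonalHypermatrix3 P) (hQ : IsOrthogonalHypermatrix3 Q)
    (R : Fin (n + m) → Fin (n + m) → Fin (n + m) → ℝ)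
    (hRP : ∀ i j k : Fin (n + m),
      ∀ (hi : (i : ℕ) < n) (hj : (j : ℕ) < n) (hk : (k : ℕ) < n),
        R i j k = P ⟨i, hi⟩ ⟨j, hj⟩ ⟨k, hk⟩)
    (hRQ : ∀ i j k : Fin (n + m),
      ∀ (hi : n ≤ (i : ℕ)) (hj : n ≤ (j : ℕ)) (hk : n ≤ (k : ℕ)),
        R i j k = Q ⟨(i : ℕ) - n, by have := i.isLt; omega⟩
                    ⟨(j : ℕ) - n, by have := j.isLt; omega⟩
                    ⟨(k : ℕ) - n, by have := k.isLt; omega⟩)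
    (hR0 : ∀ i j k : Fin (n + m),
      ¬((i : ℕ) < n ∧ (j : ℕ) < n ∧ (k : ℕ) < n) →
      ¬(n ≤ (i : ℕ) ∧ n ≤ (j : ℕ) ∧ n ≤ (k : ℕ)) →
        R i j k = 0) :
    IsOrthogonalHypermatrix3 R := by
  rw [isOrthogonalHypermatrix3_iff] at hP hQ ⊢
  rw [eq_directSum_finSumFinEquiv_symm hRP hRQ hR0]
  exact (stmt_1_general hP hQ).reindex finSumFinEquiv.symm
end

section
/- Let Q be an n×n real matrix with Q·Qᵀ = I, let λ ∈ ℝⁿ, and define A_{ij} = Σ_{t} λ_t² · Q_{it} · Q_{jt}. Assume the squares λ_0², …, λ_{n−1}² are pairwise distinct. Then for every pair of row indices i, j, the vector u ∈ ℝⁿ with entries u_t = Q_{it}·Q_{jt} is the unique solution of the Vandermonde linear system V(λ^{⋆2})·u = m, where m ∈ ℝⁿ is the moment vector with entries m_k = (A^k)_{ij} for k = 0, …, n−1; equivalently, u = V(λ^{⋆2})^{−1}·m. -/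
/-!
If `A = P D P⁻¹` with `D = diag(d)`, then `A ^ k = P D ^ k P⁻¹`, whose `(i, j)` entry is
`∑ t, d t ^ k * (P i t * P⁻¹ t j)`. Reading this for `k < n` gives the rows of a Vandermonde system
for the vector with entries `P i t * P⁻¹ t j`, and the system is invertible because its nodes `d t`
are distinct. For orthogonal `Q` one takes `P = Q` and `P⁻¹ = Qᵀ`.
Mathlib's `vandermonde d` has the powers of one node along each row, hence the transposes.
-/

open Matrix

section DiagonalProduct

variable {R l m n : Type*} [Fintype n] [DecidableEq n]

theorem mul_diagonal_mul_apply [CommSemiring R] (P : Matrix l n R) (d : n → R) (P' : Matrix n m R)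
    (i : l) (j : m) :
    (P * diagonal d * P') i j = ∑ t, d t * P i t * P' t j := by
  simp only [mul_apply (M := P * diagonal d), mul_diagonal, mul_comm (P i _)]

theorem mul_diagonal_mul_pow [CommSemiring R] {P P' : Matrix n n R} (hP : P * P' = 1) (d : n → R)
    (k : ℕ) :
    (P * diagonal d * P') ^ k = P * diagonal (d ^ k) * P' := by
  let U : (Matrix n n R)ˣ := ⟨P, P', hP, mul_eq_one_comm.mp hP⟩
  rw [← diagonal_pow]
  exact U.conj_pow (diagonal d) k

end DiagonalProduct

section Vandermonde

variable {n : ℕ}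

theorem transpose_vandermonde_mulVec_row_mul_col {R : Type*} [CommRing R]
    {P P' : Matrix (Fin n) (Fin n) R} (hP : P * P' = 1) (d : Fin n → R) (i j : Fin n) :
    (vandermonde d)ᵀ *ᵥ (P.row i * P'.col j) =
      fun k : Fin n => ((P * diagonal d * P') ^ (k : ℕ)) i j := by
  ext k
  calc ((vandermonde d)ᵀ *ᵥ (P.row i * P'.col j)) k
      = ∑ t, d t ^ (k : ℕ) * (P i t * P' t j) := rfl
    _ = ∑ t, (d ^ (k : ℕ)) t * P i t * P' t j := by simp only [Pi.pow_apply, mul_assoc]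
    _ = ((P * diagonal d * P') ^ (k : ℕ)) i j := by
      rw [mul_diagonal_mul_pow hP, mul_diagonal_mul_apply]

theorem isUnit_vandermonde_iff {K : Type*} [Field K] {d : Fin n → K} :
    IsUnit (vandermonde d) ↔ Function.Injective d := by
  rw [isUnit_iff_isUnit_det, isUnit_iff_ne_zero, det_vandermonde_ne_zero_iff]

end Vandermonde

theorem stmt_3_general {K : Type*} [Field K] {n : ℕ} {P P' : Matrix (Fin n) (Fin n) K}
    (hP : P * P' = 1) {d : Fin n → K} (hd : Function.Injective d)
    {A : Matrix (Fin n) (Fin n) K} (hA : ∀ i j, A i j = ∑ t, d t * P i t * P' t j)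
    {i j : Fin n} {u : Fin n → K} (hu : ∀ t, u t = P i t * P' t j)
    {m : Fin n → K} (hm : ∀ k : Fin n, m k = (A ^ (k : ℕ)) i j) :
    (vandermonde d)ᵀ *ᵥ u = m ∧
    (∀ u' : Fin n → K, (vandermonde d)ᵀ *ᵥ u' = m → u' = u) ∧
    u = ((vandermonde d)ᵀ)⁻¹ *ᵥ m := by
  obtain rfl : A = P * diagonal d * P' := by
    ext a b
    rw [hA, mul_diagonal_mul_apply]
  obtain rfl : u = P.row i * P'.col j := funext hu
  obtain rfl : m = _ := funext hm
  have h_sol := transpose_vandermonde_mulVec_row_mul_col hP d i j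
  have h_unit : IsUnit (vandermonde d)ᵀ := (isUnit_transpose _).mpr (isUnit_vandermonde_iff.mpr hd)
  have := h_unit.invertible
  exact ⟨h_sol, fun _ h => mulVec_injective_of_isUnit h_unit (h.trans h_sol.symm),
    (inv_mulVec_eq_vec h_sol.symm).symm⟩

/-- The Hadamard products of pairs of rows of `Q` solve, uniquely,
the block Vandermonde linear system built from the moments `(A^k)_{ij}`. -/
theorem stmt_3 (n : ℕ) (Q : Matrix (Fin n) (Fin n) ℝ)
    (hQ : Q * Qᵀ = 1) (lam : Fin n → ℝ)
    (hdist : ∀ s t : Fin n, s ≠ t → lam s ^ 2 ≠ lam t ^ 2)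
    (A : Matrix (Fin n) (Fin n) ℝ)
    (hA : ∀ i j, A i j = ∑ t, lam t ^ 2 * Q i t * Q j t)
    (i j : Fin n)
    (u : Fin n → ℝ) (hu : ∀ t, u t = Q i t * Q j t)
    (m : Fin n → ℝ) (hm : ∀ k : Fin n, m k = (A ^ (k : ℕ)) i j) :
    (Matrix.vandermonde (fun t => lam t ^ 2))ᵀ.mulVec u = m ∧
    (∀ u' : Fin n → ℝ,
      (Matrix.vandermonde (fun t => lam t ^ 2))ᵀ.mulVec u' = m → u' = u) ∧
    u = ((Matrix.vandermonde (fun t => lam t ^ 2))ᵀ)⁻¹.mulVec m :=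
  stmt_3_general hQ (fun s t => not_imp_not.mp (hdist s t)) hA hu hm
end

section
/- Let w00, w01, w11, a000, a111, a001, a011 be real numbers with a001 ≠ 0, a011 ≠ 0, w00⁶ ≠ w01⁶, w01⁶ ≠ w11⁶, and w00⁴·w01² ≠ w01⁴·w11². Suppose the two block-Vandermonde constraints hold: (w00⁴w01² − w01⁴w11²)³·(a000 − w01⁶) / (a001³·(w00⁶ − w01⁶)) = (w00²w01⁴ − w01²w11⁴)³·(a111 − w11⁶) / (a011³·(w01⁶ − w11⁶)) and (w00⁴w01² − w01⁴w11²)³·(w00⁶ − a000) / (a001³·(w00⁶ − w01⁶)) = (w00²w01⁴ − w01²w11⁴)³·(w01⁶ − a111) / (a011³·(w01⁶ − w11⁶)). Then the characteristic polynomial relation for 2×2×2 hypermatrices holds: (w00⁶·w11⁶ − w01¹²) + w01⁶·(a000 + a111) − (a111·w00⁶ + a000·w11⁶) = 0. -/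
theorem mul_eq_mul_of_proportional {M : Type*} [CommMonoidWithZero M] [IsLeftCancelMulZero M]
    {p q u u' v v' : M} (hpq : p ≠ 0 ∨ q ≠ 0) (h : p * u = q * v) (h' : p * u' = q * v') :
    u * v' = u' * v := by
  rcases hpq with hp | hq
  · refine mul_left_cancel₀ hp ?_
    calc
      p * (u * v') = q * v * v' := by rw [← mul_assoc, h]
      _ = q * v' * v := mul_right_comm q v v'
      _ = p * (u' * v) := by rw [← h', mul_assoc]
  · refine mul_left_cancel₀ hq ?_
    calc
      q * (u * v') = p * u' * u := by rw [h', mul_left_comm, mul_comm]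
      _ = p * u * u' := mul_right_comm p u' u
      _ = q * (u' * v) := by rw [h, mul_left_comm, mul_comm]

theorem stmt_9_general {K : Type*} [Field K] {w00 w01 w11 a000 a111 a001 a011 : K}
    (ha001 : a001 ≠ 0) (ha011 : a011 ≠ 0)
    (h1 : w00 ^ 6 ≠ w01 ^ 6) (h2 : w01 ^ 6 ≠ w11 ^ 6)
    (h3 : w00 ^ 4 * w01 ^ 2 ≠ w01 ^ 4 * w11 ^ 2 ∨ w00 ^ 2 * w01 ^ 4 ≠ w01 ^ 2 * w11 ^ 4)
    (hc1 : (w00 ^ 4 * w01 ^ 2 - w01 ^ 4 * w11 ^ 2) ^ 3 * (a000 - w01 ^ 6) /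
        (a001 ^ 3 * (w00 ^ 6 - w01 ^ 6)) =
      (w00 ^ 2 * w01 ^ 4 - w01 ^ 2 * w11 ^ 4) ^ 3 * (a111 - w11 ^ 6) /
        (a011 ^ 3 * (w01 ^ 6 - w11 ^ 6)))
    (hc2 : (w00 ^ 4 * w01 ^ 2 - w01 ^ 4 * w11 ^ 2) ^ 3 * (w00 ^ 6 - a000) /
        (a001 ^ 3 * (w00 ^ 6 - w01 ^ 6)) =
      (w00 ^ 2 * w01 ^ 4 - w01 ^ 2 * w11 ^ 4) ^ 3 * (w01 ^ 6 - a111) /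
        (a011 ^ 3 * (w01 ^ 6 - w11 ^ 6))) :
    (w00 ^ 6 * w11 ^ 6 - w01 ^ 12) + w01 ^ 6 * (a000 + a111) -
      (a111 * w00 ^ 6 + a000 * w11 ^ 6) = 0 := by
  rw [mul_div_right_comm, mul_div_right_comm] at hc1 hc2
  have scale_ne_zero :
      (w00 ^ 4 * w01 ^ 2 - w01 ^ 4 * w11 ^ 2) ^ 3 / (a001 ^ 3 * (w00 ^ 6 - w01 ^ 6)) ≠ 0 ∨
        (w00 ^ 2 * w01 ^ 4 - w01 ^ 2 * w11 ^ 4) ^ 3 / (a011 ^ 3 * (w01 ^ 6 - w11 ^ 6)) ≠ 0 :=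
    h3.imp
      (fun h => div_ne_zero (pow_ne_zero 3 (sub_ne_zero.mpr h))
        (mul_ne_zero (pow_ne_zero 3 ha001) (sub_ne_zero.mpr h1)))
      (fun h => div_ne_zero (pow_ne_zero 3 (sub_ne_zero.mpr h))
        (mul_ne_zero (pow_ne_zero 3 ha011) (sub_ne_zero.mpr h2)))
  -- The characteristic relation is the vanishing of the determinant of the two proportional pairs
  -- `(a000 - w01⁶, w00⁶ - a000)` and `(a111 - w11⁶, w01⁶ - a111)`.
  have cross_mul_eq : (a000 - w01 ^ 6) * (w01 ^ 6 - a111) = (w00 ^ 6 - a000) * (a111 - w11 ^ 6) :=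
    mul_eq_mul_of_proportional scale_ne_zero hc1 hc2
  linear_combination cross_mul_eq

/-- The block-Vandermonde constraints imply the vanishing of the
characteristic polynomial of a `2×2×2` hypermatrix. -/
theorem stmt_9 (w00 w01 w11 a000 a111 a001 a011 : ℝ)
    (ha001 : a001 ≠ 0) (ha011 : a011 ≠ 0)
    (h1 : w00 ^ 6 ≠ w01 ^ 6) (h2 : w01 ^ 6 ≠ w11 ^ 6)
    (h3 : w00 ^ 4 * w01 ^ 2 ≠ w01 ^ 4 * w11 ^ 2)
    (hc1 : (w00 ^ 4 * w01 ^ 2 - w01 ^ 4 * w11 ^ 2) ^ 3 * (a000 - w01 ^ 6) /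
        (a001 ^ 3 * (w00 ^ 6 - w01 ^ 6)) =
      (w00 ^ 2 * w01 ^ 4 - w01 ^ 2 * w11 ^ 4) ^ 3 * (a111 - w11 ^ 6) /
        (a011 ^ 3 * (w01 ^ 6 - w11 ^ 6)))
    (hc2 : (w00 ^ 4 * w01 ^ 2 - w01 ^ 4 * w11 ^ 2) ^ 3 * (w00 ^ 6 - a000) /
        (a001 ^ 3 * (w00 ^ 6 - w01 ^ 6)) =
      (w00 ^ 2 * w01 ^ 4 - w01 ^ 2 * w11 ^ 4) ^ 3 * (w01 ^ 6 - a111) /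
        (a011 ^ 3 * (w01 ^ 6 - w11 ^ 6))) :
    (w00 ^ 6 * w11 ^ 6 - w01 ^ 12) + w01 ^ 6 * (a000 + a111) -
      (a111 * w00 ^ 6 + a000 * w11 ^ 6) = 0 :=
  stmt_9_general ha001 ha011 h1 h2 (.inl h3) hc1 hc2
end
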